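/- arXiv:1003.4226 — 5 statements merged into one kernel-verified Lean document; each statement's English description precedes it below -/
import Mathlib

section
/- For every p > 0, t > 0 and every x ∈ ℝ, (1 + x²)^(p/2) · exp(−t·x²) ≤ (p/(2e))^(p/2) · t^(−p/2) · e^t, where e is Euler's number. -/
/-- For every `p > 0`, `t > 0` and every `x ∈ ℝ`,
`(1+x²)^(p/2) · exp(−t·x²) ≤ (p/(2e))^(p/2) · t^(−p/2) · e^t`. -/
theorem one_add_sq_rpow_mul_exp_le (p t x : ℝ) (hp : 0 < p) (ht : 0 < t) :
    (1 + x ^ 2) ^ (p / 2) * Real.exp (-(t * x ^ 2)) ≤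
      (p / (2 * Real.exp 1)) ^ (p / 2) * t ^ (-(p / 2)) * Real.exp t := by
  -- With `y = 1 + x²` and `z = 2ty/p`, the tangent-line bound `z ≤ exp (z - 1)` gives
  -- `y ≤ p / (2e) * t⁻¹ * exp (2ty/p)`; raising it to the power `p/2` is the claim.
  have key : 1 + x ^ 2 ≤
      p / (2 * Real.exp 1) * t⁻¹ * Real.exp (2 * t * (1 + x ^ 2) / p) := by
    have h := Real.add_one_le_exp (2 * t * (1 + x ^ 2) / p - 1)
    rw [sub_add_cancel, Real.exp_sub] at h
    calc 1 + x ^ 2 = p / (2 * t) * (2 * t * (1 + x ^ 2) / p) := by field_simp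
      _ ≤ p / (2 * t) * (Real.exp (2 * t * (1 + x ^ 2) / p) / Real.exp 1) := by gcongr
      _ = _ := by field_simp
  have hpow := Real.rpow_le_rpow (by positivity) key (by positivity : 0 ≤ p / 2)
  rw [Real.mul_rpow (by positivity) (by positivity),
    Real.mul_rpow (by positivity) (by positivity), Real.inv_rpow ht.le, ← Real.rpow_neg ht.le,
    ← Real.exp_mul,
    show 2 * t * (1 + x ^ 2) / p * (p / 2) = t + t * x ^ 2 by field_simp, Real.exp_add,
    ← mul_assoc] at hpow
  rwa [Real.exp_neg, ← div_eq_mul_inv, div_le_iff₀ (Real.exp_pos _)]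
end

section
/- Let n ≥ 1, let 0 ≤ k ≤ n be integers, and let ε ∈ [0,1). Let Δ_n = {(t₁,…,t_n) ∈ ℝⁿ : 0 ≤ t₁ ≤ ⋯ ≤ t_n ≤ 1} with Lebesgue measure, and for t ∈ Δ_n set s₀(t) = t₁ and s_j(t) = t_{j+1} − t_j for 1 ≤ j ≤ n−1. Then ∫_{Δ_n} ∏_{j=0}^{k−1} s_j(t)^(−(1+ε)/2) dt ≤ (2/(1−ε))^k · 1/(n−k)! (for k = 0 the empty product is 1 and the bound is the volume bound 1/n!). -/
/-!
Peel off the variables one at a time, starting from `t₁`. Once `t₁ = x` is fixed, the remaining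
variables range over the chain `x ≤ t₂ ≤ ⋯ ≤ 1`, which has the same shape with the base point
`0` replaced by `x`. So the induction bounds the integral over all chains
`a ≤ t₁ ≤ ⋯ ≤ t_n ≤ 1` with `a ∈ [0,1]` by `C^k (1-a)^(n-k) / (n-k)!`, where `C = 1/(1-α)` and
`α = (1+ε)/2 < 1` (`lintegral_chainWeight_le`). A singular factor contributes
`∫_a^1 (x-a)^(-α) (1-x)^m dx ≤ (1-a)^m ∫_a^1 (x-a)^(-α) dx ≤ C (1-a)^m` (`lintegral_rpow_sub_le`),
and a trivial one contributes `∫_a^1 (1-x)^m / m! dx = (1-a)^(m+1) / (m+1)!`.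

The integrals of the induction are lower Lebesgue integrals, for which the inequality
`∫⁻ z ≤ ∫⁻ x, ∫⁻ y` on a product and the bound `‖∫ f‖ ≤ ∫⁻ ‖f‖` hold for every function; hence
neither measurability nor integrability of the integrand has to be checked.
-/

open MeasureTheory

noncomputable section

/-- The standard `m`-simplex `Δ_m = {t ∈ ℝ^m : 0 ≤ t₁ ≤ ⋯ ≤ t_m ≤ 1}`. -/
def orderedSimplex (m : ℕ) : Set (Fin m → ℝ) :=
  {t | (∀ i, 0 ≤ t i ∧ t i ≤ 1) ∧ ∀ i j : Fin m, i ≤ j → t i ≤ t j}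

/-- The successive gaps `s₀ = t₁`, `s_j = t_{j+1} − t_j` (`1 ≤ j ≤ m−1`), `s_m = 1 − t_m`
of a point `t = (t₁,…,t_m)` of the standard `m`-simplex. -/
def gap (m : ℕ) (t : Fin m → ℝ) (j : Fin (m + 1)) : ℝ :=
  (if h : (j : ℕ) < m then t ⟨j, h⟩ else 1) -
    (if _ : 0 < (j : ℕ) then t ⟨(j : ℕ) - 1, by have := j.isLt; omega⟩ else 0)

/-- The integrand `∏_{j<k} s_j^(-α)` on the chains `a ≤ t₁ ≤ ⋯ ≤ t_n ≤ 1`, extended by `0`, where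
the first gap is `s₀ = t₁ - a`. It is defined by recursion on the number of variables: the tail
`(t₂,…,t_n)` is a chain based at `t₁`, with `k - 1` singular factors left (none if `k = 0`). -/
def chainWeight (α : ℝ) : (n : ℕ) → ℕ → ℝ → (Fin n → ℝ) → ENNReal
  | 0, _, _, _ => 1
  | n + 1, k, a, t =>
    (Set.Icc a 1).indicator
      (fun x => (if k = 0 then 1 else ENNReal.ofReal ((x - a) ^ (-α))) *
        chainWeight α n (k - 1) x (Fin.tail t)) (t 0)

/-- On a chain, the product of powers of consecutive differences is the recursive weight. -/
lemma prod_eq_chainWeight (α : ℝ) (n k : ℕ) (a : ℝ) (t : Fin n → ℝ) (hm : Monotone t)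
    (h : ∀ i, a ≤ t i ∧ t i ≤ 1) :
    (∏ j : Fin n, if (j : ℕ) < k then
      ENNReal.ofReal ((t j - (Fin.cons a t : Fin (n + 1) → ℝ) j.castSucc) ^ (-α)) else 1) =
      chainWeight α n k a t := by
  induction n generalizing k a with
  | zero => simp [chainWeight]
  | succ n ih =>
    have htail := ih (k - 1) (t 0) (Fin.tail t)
      (fun i j hij => hm (Fin.succ_le_succ_iff.mpr hij))
      (fun i => ⟨hm (Fin.zero_le _), (h _).2⟩)
    rw [chainWeight, Set.indicator_of_mem (show t 0 ∈ Set.Icc a 1 from h 0), ← htail,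
      Fin.prod_univ_succ]
    congr 1
    · rcases Nat.eq_zero_or_pos k with rfl | hk
      · simp
      · simp [hk, hk.ne']
    · refine Finset.prod_congr rfl fun j _ => ?_
      have hlt : ((j.succ : Fin (n + 1)) : ℕ) < k ↔ (j : ℕ) < k - 1 := by
        rw [Fin.val_succ]; omega
      have hprev : (Fin.cons a t : Fin (n + 2) → ℝ) j.succ.castSucc =
          (Fin.cons (t 0) (Fin.tail t) : Fin (n + 1) → ℝ) j.castSucc := by
        rw [Fin.cons_self_tail, ← Fin.succ_castSucc, Fin.cons_succ]
      simp only [hlt, hprev]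
      rfl

lemma lintegral_rpow_sub_le (α a : ℝ) (hα : α < 1) (ha0 : 0 ≤ a) (ha1 : a ≤ 1) :
    ∫⁻ x in Set.Icc a 1, ENNReal.ofReal ((x - a) ^ (-α)) ≤ ENNReal.ofReal (1 / (1 - α)) := by
  have hint : IntervalIntegrable (fun x : ℝ => (x - a) ^ (-α)) volume a 1 := by
    have h := (intervalIntegral.intervalIntegrable_rpow' (a := 0) (b := 1 - a)
      (show -1 < -α by linarith)).comp_sub_right a
    simpa using h
  have hval : ∫ x in a..1, (x - a) ^ (-α) = (1 - a) ^ (1 - α) / (1 - α) := by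
    rw [intervalIntegral.integral_comp_sub_right (fun x : ℝ => x ^ (-α)) a,
      integral_rpow (Or.inl (by linarith)), sub_self, Real.zero_rpow (by linarith)]
    ring_nf
  rw [← restrict_Ioc_eq_restrict_Icc, ← ofReal_integral_eq_lintegral_ofReal
    ((intervalIntegrable_iff_integrableOn_Ioc_of_le ha1).mp hint),
    ← intervalIntegral.integral_of_le ha1, hval]
  · have h1 : (1 - a) ^ (1 - α) ≤ 1 :=
      Real.rpow_le_one (by linarith) (by linarith) (by linarith)
    have h2 : 0 < 1 - α := by linarith
    gcongr
  · filter_upwards [ae_restrict_mem measurableSet_Ioc] with x hx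
    exact Real.rpow_nonneg (by linarith [hx.1]) _

lemma lintegral_pow_sub (m : ℕ) (a : ℝ) (ha1 : a ≤ 1) :
    ∫⁻ x in Set.Icc a 1, ENNReal.ofReal ((1 - x) ^ m / m.factorial) =
      ENNReal.ofReal ((1 - a) ^ (m + 1) / (m + 1).factorial) := by
  have hval : ∫ x in a..1, (1 - x) ^ m / (m.factorial : ℝ) =
      (1 - a) ^ (m + 1) / (m + 1).factorial := by
    rw [intervalIntegral.integral_div,
      intervalIntegral.integral_comp_sub_left (fun x : ℝ => x ^ m) 1, integral_pow,
      Nat.factorial_succ]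
    push_cast
    field_simp
    simp
  have hint : IntervalIntegrable (fun x : ℝ => (1 - x) ^ m / (m.factorial : ℝ)) volume a 1 :=
    Continuous.intervalIntegrable (by fun_prop) _ _
  rw [← restrict_Ioc_eq_restrict_Icc, ← ofReal_integral_eq_lintegral_ofReal
    ((intervalIntegrable_iff_integrableOn_Ioc_of_le ha1).mp hint),
    ← intervalIntegral.integral_of_le ha1, hval]
  filter_upwards [ae_restrict_mem measurableSet_Ioc] with x hx
  have : 0 ≤ 1 - x := by linarith [hx.2]
  simp only [Pi.zero_apply]
  positivity

/-- Integrating out the first variable. -/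
lemma lintegral_chainWeight_succ_le (α : ℝ) (n k : ℕ) (a : ℝ) :
    ∫⁻ t, chainWeight α (n + 1) k a t ≤
      ∫⁻ x in Set.Icc a 1, (if k = 0 then 1 else ENNReal.ofReal ((x - a) ^ (-α))) *
        ∫⁻ t, chainWeight α n (k - 1) x t := by
  have e := (volume_preserving_piFinSuccAbove (fun _ : Fin (n + 1) => ℝ) 0).symm
  rw [← e.lintegral_comp_emb (MeasurableEquiv.measurableEmbedding _)]
  refine (lintegral_prod_le _).trans ?_
  rw [← lintegral_indicator measurableSet_Icc]
  refine lintegral_mono fun x => ?_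
  have hpt : ∀ t : Fin n → ℝ, chainWeight α (n + 1) k a
      ((MeasurableEquiv.piFinSuccAbove (fun _ : Fin (n + 1) => ℝ) 0).symm (x, t)) =
      (Set.Icc a 1).indicator
      (fun x => (if k = 0 then 1 else ENNReal.ofReal ((x - a) ^ (-α))) *
        chainWeight α n (k - 1) x t) x := by
    intro t
    simp [chainWeight, MeasurableEquiv.piFinSuccAbove, Fin.insertNthEquiv]
  simp only [hpt]
  by_cases hx : x ∈ Set.Icc a 1
  · simp only [Set.indicator_of_mem hx]
    rw [lintegral_const_mul']
    split_ifs <;> simp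
  · simp [Set.indicator_of_notMem hx]

lemma lintegral_chainWeight_le (α : ℝ) (hα : α < 1) (n k : ℕ) (hk : k ≤ n) (a : ℝ)
    (ha0 : 0 ≤ a) (ha1 : a ≤ 1) :
    ∫⁻ t, chainWeight α n k a t ≤
      ENNReal.ofReal ((1 / (1 - α)) ^ k * ((1 - a) ^ (n - k) / (n - k).factorial)) := by
  have hC : 0 ≤ 1 / (1 - α) := one_div_nonneg.mpr (by linarith)
  induction n generalizing k a with
  | zero =>
    obtain rfl : k = 0 := by omega
    simp [chainWeight, volume_pi]
  | succ n ih =>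
    refine (lintegral_chainWeight_succ_le α n k a).trans ?_
    rcases k with _ | k
    · calc _ ≤ ∫⁻ x in Set.Icc a 1, ENNReal.ofReal ((1 - x) ^ n / n.factorial) := by
            refine setLIntegral_mono' measurableSet_Icc fun x hx => ?_
            simpa using ih 0 (Nat.zero_le _) x (ha0.trans hx.1) hx.2
        _ = _ := by rw [lintegral_pow_sub n a ha1]; simp
    · have hk' : k ≤ n := by omega
      set D : ℝ := (1 / (1 - α)) ^ k * ((1 - a) ^ (n - k) / (n - k).factorial) with hD
      calc _ ≤ ∫⁻ x in Set.Icc a 1, ENNReal.ofReal ((x - a) ^ (-α)) * ENNReal.ofReal D := by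
            refine setLIntegral_mono' measurableSet_Icc fun x hx => ?_
            have h1x : 0 ≤ 1 - x := by linarith [hx.2]
            rw [if_neg (Nat.succ_ne_zero k), Nat.add_sub_cancel]
            refine mul_le_mul_right ((ih k hk' x (ha0.trans hx.1) hx.2).trans ?_) _
            rw [hD]
            have := hx.1
            gcongr
        _ = (∫⁻ x in Set.Icc a 1, ENNReal.ofReal ((x - a) ^ (-α))) * ENNReal.ofReal D :=
            lintegral_mul_const' _ _ ENNReal.ofReal_ne_top
        _ ≤ ENNReal.ofReal (1 / (1 - α)) * ENNReal.ofReal D := by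
            gcongr
            exact lintegral_rpow_sub_le α a hα ha0 ha1
        _ = _ := by
            rw [← ENNReal.ofReal_mul hC, hD, Nat.add_sub_add_right, pow_succ']
            ring_nf

lemma measurableSet_orderedSimplex (n : ℕ) : MeasurableSet (orderedSimplex n) := by
  refine IsClosed.measurableSet ?_
  simp only [orderedSimplex, Set.ofPred_and, Set.ofPred_forall]
  refine IsClosed.inter (isClosed_iInter fun i => IsClosed.inter ?_ ?_)
    (isClosed_iInter fun i => isClosed_iInter fun j => isClosed_iInter fun _ => ?_)
  all_goals exact isClosed_le (by fun_prop) (by fun_prop)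

lemma gap_castSucc (n : ℕ) (t : Fin n → ℝ) (j : Fin n) :
    gap n t j.castSucc = t j - (Fin.cons 0 t : Fin (n + 1) → ℝ) j.castSucc := by
  rcases n with _ | n
  · exact j.elim0
  · cases j using Fin.cases with
    | zero => simp [gap]
    | succ j =>
      rw [← Fin.succ_castSucc, Fin.cons_succ]
      simp [gap]
      rfl

/-- The simplex integral estimate
`∫_{Δ_n} ∏_{j=0}^{k−1} s_j^{−(1+ε)/2} dt ≤ (2/(1−ε))^k / (n−k)!` for `1 ≤ n`, `0 ≤ k ≤ n`
and `ε ∈ [0,1)`. -/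
theorem simplex_integral_estimate (n k : ℕ) (hn : 1 ≤ n) (hk : k ≤ n)
    (ε : ℝ) (hε0 : 0 ≤ ε) (hε1 : ε < 1) :
    (∫ t in orderedSimplex n,
        ∏ j : Fin (n + 1), if (j : ℕ) < k then gap n t j ^ (-((1 + ε) / 2)) else 1) ≤
      (2 / (1 - ε)) ^ k * (1 / (Nat.factorial (n - k))) := by
  have hC : 1 / (1 - (1 + ε) / 2) = 2 / (1 - ε) := by
    have h1 : 1 - ε ≠ 0 := by linarith
    rw [show 1 - (1 + ε) / 2 = (1 - ε) / 2 by ring, one_div_div]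
  have hC0 : 0 ≤ 2 / (1 - ε) := div_nonneg (by norm_num) (by linarith)
  refine (Real.le_norm_self _).trans ((norm_integral_le_lintegral_norm _).trans ?_)
  refine ENNReal.toReal_le_of_le_ofReal (by positivity) ?_
  have hmain := lintegral_chainWeight_le ((1 + ε) / 2) (by linarith) n k hk 0 le_rfl zero_le_one
  rw [hC, sub_zero, one_pow] at hmain
  refine le_trans ?_ ((setLIntegral_le_lintegral (orderedSimplex n) _).trans hmain)
  refine setLIntegral_mono' (measurableSet_orderedSimplex n) fun t ht => ?_
  have hmono : Monotone t := fun i j hij => ht.2 i j hij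
  rw [← prod_eq_chainWeight _ n k 0 t hmono ht.1, Fin.prod_univ_castSucc]
  -- The last gap `s_n = 1 - t_n` never carries a singular factor, because `k ≤ n`.
  rw [if_neg (by simpa using hk), mul_one, norm_prod,
    ENNReal.ofReal_prod_of_nonneg fun _ _ => norm_nonneg _]
  refine le_of_eq (Finset.prod_congr rfl fun j _ => ?_)
  rw [Fin.val_castSucc]
  split_ifs
  · have hgap : 0 ≤ gap n t j.castSucc := by
      rw [gap_castSucc, sub_nonneg]
      rcases n with _ | n
      · exact j.elim0
      · cases j using Fin.cases with
        | zero => simpa using (ht.1 0).1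
        | succ j =>
          rw [← Fin.succ_castSucc, Fin.cons_succ]
          exact hmono (Fin.castSucc_lt_succ).le
    rw [Real.norm_of_nonneg (Real.rpow_nonneg hgap _), gap_castSucc]
  · simp

end
end

section
/- Let A be a unital C*-algebra, let a ∈ A be positive and invertible, and let α ∈ (0,2). Set C_α = ∫₀^∞ x^(−α/2)/(1+x) dx and C_α′ = ∫₀^∞ (ln x)·x^(−α/2)/(1+x) dx. Then the A-valued Bochner integral ∫₀^∞ λ^(−α/2)·(ln λ)·(a + λ·1)⁻¹ dλ converges, and f(a) = (1/C_α) · ∫₀^∞ λ^(−α/2)·(ln λ)·(a + λ·1)⁻¹ dλ − (C_α′/C_α) · g(a), where f(x) = x^(−α/2)·ln x and g(x) = x^(−α/2) and f(a), g(a) denote the continuous functional calculus of a. -/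
/-!
Write `s = α / 2 ∈ (0, 1)`, `C = ∫₀^∞ t^(-s) / (1 + t) dt` and
`C' = ∫₀^∞ t^(-s) (log t) / (1 + t) dt`. For a scalar `x > 0`, the substitution `l = x t` gives
`∫₀^∞ l^(-s) (log l) / (x + l) dl = x^(-s) ∫₀^∞ t^(-s) (log x + log t) / (1 + t) dt
  = C x^(-s) log x + C' x^(-s)`,
which is the formula on the spectrum of `a` (`integral_rpow_mul_log_mul_inv_add`). All the integrals
converge because `|log t|` is dominated by a multiple of `t^δ + t^(-δ)` with `δ` so small that
`-s ± δ` stays in `(-1, 0)`.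

As `a` is positive and invertible, its spectrum is bounded below by some `ε > 0`, so the integrand
`l^(-s) (log l) / (z + l)` is bounded on the spectrum by a constant multiple of
`|l^(-s) log l| / (1 + l)`, uniformly in `z`. Hence the continuous functional calculus
commutes with the integral in `l`, and it sends `z ↦ (z + l)⁻¹` to the resolvent. Solving for
the logarithmic term is possible because `C > 0`.
-/

open MeasureTheory

/-- The exponents in `(-1, 0)` are those for which `t ^ p / (1 + t)` is integrable both at `0` and
at `∞`. -/
lemma integrableOn_rpow_div_one_add {p : ℝ} (hp : -1 < p) (hp' : p < 0) :
    IntegrableOn (fun t : ℝ => t ^ p / (1 + t)) (Set.Ioi 0) := by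
  have hq : p + 1 ∈ Set.Ioo (0 : ℝ) 1 := ⟨by linarith, by linarith⟩
  refine (Real.integrableOn_rpowIntegrand₀₁_Ioi hq zero_le_one).congr_fun ?_ measurableSet_Ioi
  intro t ht
  have ht' : 0 < t := ht
  simp only [Real.rpowIntegrand₀₁]
  rw [Real.rpow_add_one ht'.ne']
  field_simp
  ring

lemma integral_rpow_div_one_add_pos {p : ℝ} (hp : -1 < p) (hp' : p < 0) :
    0 < ∫ t in Set.Ioi (0 : ℝ), t ^ p / (1 + t) := by
  have hq : p + 1 ∈ Set.Ioo (0 : ℝ) 1 := ⟨by linarith, by linarith⟩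
  convert! Real.integral_rpowIntegrand₀₁_one_pos hq using 1
  refine setIntegral_congr_fun measurableSet_Ioi fun t ht => ?_
  have ht' : 0 < t := ht
  simp only [Real.rpowIntegrand₀₁]
  rw [Real.rpow_add_one ht'.ne']
  field_simp
  ring

lemma abs_log_le_rpow_add_rpow_neg {t δ : ℝ} (ht : 0 < t) (hδ : 0 < δ) :
    |Real.log t| ≤ (t ^ δ + t ^ (-δ)) / δ := by
  have h1 := Real.log_le_rpow_div ht.le hδ
  have h2 := Real.log_le_rpow_div (inv_pos.2 ht).le hδ
  rw [Real.log_inv, Real.inv_rpow ht.le, ← Real.rpow_neg ht.le] at h2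
  have h3 : 0 ≤ t ^ δ / δ := by positivity
  have h4 : 0 ≤ t ^ (-δ) / δ := by positivity
  rw [abs_le, add_div]
  constructor <;> linarith

lemma integrableOn_log_mul_rpow_div_one_add {p : ℝ} (hp : -1 < p) (hp' : p < 0) :
    IntegrableOn (fun t : ℝ => Real.log t * t ^ p / (1 + t)) (Set.Ioi 0) := by
  obtain ⟨δ, hδ, h1, h2⟩ : ∃ δ : ℝ, 0 < δ ∧ -1 < p - δ ∧ p + δ < 0 := by
    refine ⟨min (p + 1) (-p) / 2, ?_, ?_, ?_⟩
    · have : 0 < min (p + 1) (-p) := lt_min (by linarith) (by linarith)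
      linarith
    · linarith [min_le_left (p + 1) (-p)]
    · linarith [min_le_right (p + 1) (-p)]
  have hb := ((integrableOn_rpow_div_one_add (p := p + δ) (by linarith) h2).add
    (integrableOn_rpow_div_one_add (p := p - δ) h1 (by linarith))).const_mul δ⁻¹
  refine Integrable.mono' hb ?_ ?_
  · refine Measurable.aestronglyMeasurable ?_
    fun_prop
  · refine ae_restrict_of_forall_mem measurableSet_Ioi fun t ht => ?_
    have ht' : 0 < t := ht
    have hpos : 0 < t ^ p / (1 + t) := by positivity
    rw [mul_div_assoc, norm_mul, Real.norm_eq_abs, Real.norm_of_nonneg hpos.le]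
    refine (mul_le_mul_of_nonneg_right (abs_log_le_rpow_add_rpow_neg ht' hδ) hpos.le).trans_eq ?_
    simp only [Pi.add_apply]
    rw [sub_eq_add_neg, Real.rpow_add ht', Real.rpow_add ht']
    field_simp

/-- The scalar resolvent formula, by the substitution `l = x * t`. -/
lemma integral_rpow_mul_log_mul_inv_add {p x : ℝ} (hp : -1 < p) (hp' : p < 0) (hx : 0 < x) :
    ∫ l in Set.Ioi (0 : ℝ), l ^ p * Real.log l * (x + l)⁻¹ =
      (∫ t in Set.Ioi (0 : ℝ), t ^ p / (1 + t)) * (x ^ p * Real.log x) +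
        (∫ t in Set.Ioi (0 : ℝ), Real.log t * t ^ p / (1 + t)) * x ^ p := by
  have h := integral_comp_mul_left_Ioi (fun l : ℝ => l ^ p * Real.log l * (x + l)⁻¹) 0 hx
  rw [mul_zero, smul_eq_mul, eq_inv_mul_iff_mul_eq₀ hx.ne'] at h
  rw [← h, ← integral_const_mul, ← integral_mul_const, ← integral_mul_const, ← integral_add]
  · refine setIntegral_congr_fun measurableSet_Ioi fun t ht => ?_
    have ht' : 0 < t := ht
    rw [Real.mul_rpow hx.le ht'.le, Real.log_mul hx.ne' ht'.ne']
    have : x + x * t = x * (1 + t) := by ring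
    rw [this]
    field_simp
  · exact (integrableOn_rpow_div_one_add hp hp').mul_const _
  · exact (integrableOn_log_mul_rpow_div_one_add hp hp').mul_const _

/-- Invertibility keeps the compact spectrum of a positive element away from `0`. -/
lemma exists_pos_le_spectrum {A : Type*} [CStarAlgebra A] [PartialOrder A] [StarOrderedRing A]
    {a : A} (ha : 0 ≤ a) (hu : IsUnit a) :
    ∃ ε : ℝ, 0 < ε ∧ ∀ z ∈ spectrum ℝ a, ε ≤ z := by
  have hpos : ∀ z ∈ spectrum ℝ a, 0 < z := fun z hz =>
    lt_of_le_of_ne (spectrum_nonneg_of_nonneg ha hz) fun h0 =>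
      (spectrum.zero_notMem_iff ℝ).2 hu (h0 ▸ hz)
  rcases (spectrum ℝ a).eq_empty_or_nonempty with h | h
  -- The spectrum is empty exactly when the algebra is trivial.
  · exact ⟨1, one_pos, by simp [h]⟩
  · obtain ⟨m, hm, hmin⟩ := (ContinuousFunctionalCalculus.isCompact_spectrum a).exists_isLeast h
    exact ⟨m, hpos m hm, fun z hz => hmin hz⟩

/-- **Resolvent-integral formula for `a^(−α/2)·ln a`.**  Let `A` be a unital C*-algebra,
`a ∈ A` positive and invertible, `α ∈ (0,2)`.  With
`C_α = ∫₀^∞ x^(−α/2)/(1+x) dx` and `C_α′ = ∫₀^∞ (ln x)·x^(−α/2)/(1+x) dx`, the Bochner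
integral `∫₀^∞ λ^(−α/2)·(ln λ)·(a+λ)⁻¹ dλ` converges and
`f(a) = (1/C_α)·∫₀^∞ λ^(−α/2)·(ln λ)·(a+λ)⁻¹ dλ − (C_α′/C_α)·g(a)` where
`f(x) = x^(−α/2)·ln x` and `g(x) = x^(−α/2)` via the continuous functional calculus. -/
theorem cfc_rpow_mul_log_eq_resolvent_integral (A : Type*) [CStarAlgebra A]
    [PartialOrder A] [StarOrderedRing A] (a : A) (ha : 0 ≤ a) (hu : IsUnit a)
    (α : ℝ) (hα0 : 0 < α) (hα2 : α < 2) :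
    IntegrableOn
        (fun l : ℝ => (l ^ (-(α / 2)) * Real.log l) • Ring.inverse (a + l • 1)) (Set.Ioi 0) ∧
      cfc (fun x : ℝ => x ^ (-(α / 2)) * Real.log x) a =
        (1 / ∫ x in Set.Ioi (0 : ℝ), x ^ (-(α / 2)) / (1 + x)) •
            (∫ l in Set.Ioi (0 : ℝ),
              (l ^ (-(α / 2)) * Real.log l) • Ring.inverse (a + l • 1)) -
          ((∫ x in Set.Ioi (0 : ℝ), Real.log x * x ^ (-(α / 2)) / (1 + x)) /
              ∫ x in Set.Ioi (0 : ℝ), x ^ (-(α / 2)) / (1 + x)) •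
            cfc (fun x : ℝ => x ^ (-(α / 2))) a := by
  have hp : -1 < -(α / 2) := by linarith
  have hp' : -(α / 2) < 0 := by linarith
  generalize -(α / 2) = p at hp hp' ⊢
  obtain ⟨ε, hε, hspec⟩ := exists_pos_le_spectrum ha hu
  have hpos : ∀ z ∈ spectrum ℝ a, 0 < z := fun z hz => hε.trans_le (hspec z hz)
  have hC := integral_rpow_div_one_add_pos hp hp'
  set C := ∫ x in Set.Ioi (0 : ℝ), x ^ p / (1 + x) with hCdef
  set C' := ∫ x in Set.Ioi (0 : ℝ), Real.log x * x ^ p / (1 + x) with hC'def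
  have hrpow : ContinuousOn (fun x : ℝ => x ^ p) (spectrum ℝ a) := fun z hz =>
    (Real.continuousAt_rpow_const z p (Or.inl (hpos z hz).ne')).continuousWithinAt
  have hlog : ContinuousOn (fun x : ℝ => x ^ p * Real.log x) (spectrum ℝ a) :=
    hrpow.mul fun z hz => (Real.continuousAt_log (hpos z hz).ne').continuousWithinAt
  let f : ℝ → ℝ → ℝ := fun l z => l ^ p * Real.log l * (z + l)⁻¹
  -- This choice of `K` gives `1 + l ≤ K * (z + l)` for all `z ≥ ε` and `l > 0`.
  let K : ℝ := max 1 ε⁻¹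
  let b : ℝ → ℝ := fun l => K * ‖Real.log l * l ^ p / (1 + l)‖
  have hf : ContinuousOn (Function.uncurry f) (Set.Ioi (0 : ℝ) ×ˢ spectrum ℝ a) := by
    rintro ⟨l, z⟩ ⟨hl, hz⟩
    have hl' : 0 < l := hl
    have hz' := hpos z hz
    refine ContinuousAt.continuousWithinAt ?_
    refine ((ContinuousAt.rpow_const continuousAt_fst (Or.inl hl'.ne')).mul
      (continuousAt_fst.log hl'.ne')).mul
      ((continuousAt_snd.add continuousAt_fst).inv₀ ?_)
    exact (add_pos hz' hl').ne'
  have hb : ∀ᵐ l ∂(volume.restrict (Set.Ioi (0 : ℝ))), ∀ z ∈ spectrum ℝ a, ‖f l z‖ ≤ b l := by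
    refine ae_restrict_of_forall_mem measurableSet_Ioi fun l hl z hz => ?_
    have hl' : 0 < l := hl
    have hz' := hpos z hz
    have h1 : 1 + l ≤ K * (z + l) := by
      have hKz : 1 ≤ K * z :=
        calc (1 : ℝ) = ε⁻¹ * ε := (inv_mul_cancel₀ hε.ne').symm
          _ ≤ K * z := mul_le_mul (le_max_right _ _) (hspec z hz) hε.le (by positivity)
      have hKl : l ≤ K * l := le_mul_of_one_le_left hl'.le (le_max_left _ _)
      linarith
    have h2 : (z + l)⁻¹ ≤ K * (1 + l)⁻¹ := by
      rw [← div_eq_mul_inv, inv_eq_one_div, div_le_div_iff₀ (by positivity) (by positivity)]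
      linarith
    calc ‖f l z‖ = ‖Real.log l * l ^ p‖ * (z + l)⁻¹ := by
          simp only [f]
          rw [norm_mul, Real.norm_of_nonneg (by positivity : 0 ≤ (z + l)⁻¹), mul_comm (l ^ p)]
      _ ≤ ‖Real.log l * l ^ p‖ * (K * (1 + l)⁻¹) := by gcongr
      _ = b l := by
          simp only [b]
          rw [norm_div, Real.norm_of_nonneg (by positivity : 0 ≤ 1 + l)]
          ring
  have hbi : HasFiniteIntegral b (volume.restrict (Set.Ioi (0 : ℝ))) :=
    ((integrableOn_log_mul_rpow_div_one_add hp hp').norm.const_mul K).2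
  have hres : ∀ l ∈ Set.Ioi (0 : ℝ),
      cfc (f l) a = (l ^ p * Real.log l) • Ring.inverse (a + l • (1 : A)) := by
    intro l hl
    have hl' : 0 < l := hl
    have hne : ∀ z ∈ spectrum ℝ a, z + l ≠ 0 := fun z hz => (add_pos (hpos z hz) hl').ne'
    have hinv : ContinuousOn (fun z : ℝ => (z + l)⁻¹) (spectrum ℝ a) :=
      (continuousOn_id.add continuousOn_const).inv₀ hne
    simp only [f]
    rw [cfc_const_mul _ _ a hinv, cfc_inv (fun z : ℝ => z + l) a hne,
      cfc_add_const l (fun z : ℝ => z) a, cfc_id' ℝ a, Algebra.algebraMap_eq_smul_one]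
  refine ⟨(integrableOn_cfc measurableSet_Ioi f b a hf hb hbi).congr_fun hres measurableSet_Ioi, ?_⟩
  have hint : cfc (fun x : ℝ => C * (x ^ p * Real.log x) + C' * x ^ p) a =
      ∫ l in Set.Ioi (0 : ℝ), (l ^ p * Real.log l) • Ring.inverse (a + l • (1 : A)) := by
    rw [← setIntegral_congr_fun measurableSet_Ioi hres,
      ← cfc_setIntegral measurableSet_Ioi f b a hf hb hbi]
    exact cfc_congr fun x hx => (integral_rpow_mul_log_mul_inv_add hp hp' (hpos x hx)).symm
  rw [cfc_add a (fun x : ℝ => C * (x ^ p * Real.log x)) (fun x : ℝ => C' * x ^ p)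
    (continuousOn_const.mul hlog) (continuousOn_const.mul hrpow),
    cfc_const_mul C _ a hlog, cfc_const_mul C' _ a hrpow] at hint
  rw [← hint, smul_add, smul_smul, smul_smul, one_div_mul_cancel hC.ne', one_smul,
    one_div_mul_eq_div, add_sub_cancel_right]
end

section
/- Let n ≥ 1 be odd, let N ≥ 1, and let F, a₀, a₁, …, a_{n+2} be N×N complex matrices with F² = 1. Define ψ(b₀, b₁, …, b_{n+1}) := Tr(b₀ · F · [F,b₁] · [F,b₂] ⋯ [F,b_{n+1}]) for N×N matrices b₀,…,b_{n+1}. Then Σ_{j=0}^{n+1} (−1)^j · ψ(a₀, …, a_j·a_{j+1}, …, a_{n+2}) + (−1)^{n+2} · ψ(a_{n+2}·a₀, a₁, …, a_{n+1}) = −(1/2) · Tr(F · [F,a₀] · [F,a₁] ⋯ [F,a_{n+2}]), where in the j-th summand the arguments a_j and a_{j+1} are replaced by their product. -/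
/-!
Write `d x = F x - x F` and `P = d a₁ ⋯ d a_{n+2}`. Since `d` is a derivation, the alternating sum of
the words `d a₁ ⋯ d (a_j a_{j+1}) ⋯ d a_{n+2}` telescopes to
`a₁ d a₂ ⋯ d a_{n+2} - (-1)^(n+1) d a₁ ⋯ d a_{n+1} a_{n+2}` (`sum_prod_mergeAt`). After
multiplication by `a₀ F` the second boundary word cancels, by cyclicity of the trace, against the
cyclic term `ψ(a_{n+2} a₀, a₁, …)`; the first combines with the `j = 0` term
`Tr(a₀ a₁ F d a₂ ⋯ d a_{n+2})`, so that the left side equals `-Tr(a₀ P)`.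

On the other side, `F² = 1` makes `F` anticommute with every `d x`, hence with `P`, which has the odd
number `n + 2` of factors (`mul_prod_commutator`). Therefore
`Tr(F (F a₀ - a₀ F) P) = Tr(a₀ P) + Tr(F a₀ P F) = 2 Tr(a₀ P)`.
-/

open scoped Matrix

noncomputable section

/-- The cochain `ψ(b₀,b₁,…,b_{n+1}) = Tr(b₀ · F · [F,b₁] ⋯ [F,b_{n+1}])`. -/
def psiCochain {N : ℕ} (n : ℕ) (F : Matrix (Fin N) (Fin N) ℂ)
    (b : Fin (n + 2) → Matrix (Fin N) (Fin N) ℂ) : ℂ :=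
  (b 0 * F *
    (List.ofFn fun i : Fin (n + 1) => F * b i.succ - b i.succ * F).prod).trace

section Telescope

variable {R : Type*} [Ring R]

/-- The tuple obtained from `c` by replacing the neighbouring entries `c_j, c_{j+1}` by their
product. It is spelled in the form in which the terms of the Hochschild boundary are written. -/
def mergeAt {m : ℕ} (c : Fin (m + 1) → R) (j : Fin m) : Fin m → R :=
  Fin.removeNth j.succ (Function.update c j.castSucc (c j.castSucc * c j.succ))

theorem mergeAt_zero_zero {m : ℕ} (c : Fin (m + 2) → R) : mergeAt c 0 0 = c 0 * c 1 := by
  simp [mergeAt, Fin.removeNth]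

theorem mergeAt_zero_succ {m : ℕ} (c : Fin (m + 2) → R) (i : Fin m) :
    mergeAt c 0 i.succ = c i.succ.succ := by
  have h : (Fin.succ 0 : Fin (m + 2)).succAbove i.succ = i.succ.succ := by
    rw [Fin.succ_succAbove_succ, Fin.zero_succAbove]
  rw [mergeAt, Fin.removeNth, h, Function.update_of_ne]
  exact Fin.succ_ne_zero _

theorem mergeAt_succ_zero {m : ℕ} (c : Fin (m + 2) → R) (j : Fin m) :
    mergeAt c j.succ 0 = c 0 := by
  rw [mergeAt, Fin.removeNth, Fin.succ_succAbove_zero, Function.update_of_ne]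
  exact (Fin.ne_of_val_ne (by simp))

theorem mergeAt_succ_succ {m : ℕ} (c : Fin (m + 2) → R) (j i : Fin m) :
    mergeAt c j.succ i.succ = mergeAt (fun k => c k.succ) j i := by
  simp only [mergeAt, Fin.removeNth, Fin.succ_succAbove_succ, Function.update_apply,
    Fin.castSucc_succ, Fin.succ_inj]

/-- The telescoping identity: for the derivation `d = [F, ·]`, the alternating sum of the words
`d c₀ ⋯ d (c_j c_{j+1}) ⋯ d c_m` leaves only the two boundary words, in which the first,
respectively the last, letter is not differentiated. -/
theorem sum_prod_mergeAt (F : R) {m : ℕ} (c : Fin (m + 1) → R) :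
    ∑ j : Fin m, (-1 : R) ^ (j : ℕ) *
        (List.ofFn fun i : Fin m => F * mergeAt c j i - mergeAt c j i * F).prod =
      c 0 * (List.ofFn fun i : Fin m => F * c i.succ - c i.succ * F).prod -
        (-1) ^ m *
          ((List.ofFn fun i : Fin m => F * c i.castSucc - c i.castSucc * F).prod *
            c (Fin.last m)) := by
  induction m with
  | zero => simp
  | succ m ih =>
    have h := ih fun k => c k.succ
    have hneg : ∀ (k : ℕ) (x y : R), (-1 : R) ^ (k + 1) * (x * y) = -(x * ((-1) ^ k * y)) := by
      intro k x y
      rw [pow_succ, ← mul_assoc x, ((Commute.neg_one_left x).pow_left k).eq.symm]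
      simp [mul_assoc]
    rw [Fin.sum_univ_succ]
    simp only [List.ofFn_succ, List.prod_cons, mergeAt_zero_zero, mergeAt_zero_succ,
      mergeAt_succ_zero, mergeAt_succ_succ, Fin.val_succ, Fin.val_zero, pow_zero, one_mul,
      Fin.castSucc_zero, Fin.castSucc_succ, hneg, Finset.sum_neg_distrib, ← Finset.mul_sum,
      mul_assoc _ _ (c (Fin.last (m + 1)))]
    rw [h]
    simp only [Fin.succ_last, Fin.succ_zero_eq_one]
    noncomm_ring

/-- If `F² = 1`, then `F` anticommutes with each commutator `[F, c]`, hence commutes up to the sign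
`(-1)^m` with a product of `m` of them. -/
theorem mul_prod_commutator (F : R) (hF : F * F = 1) {m : ℕ} (c : Fin m → R) :
    F * (List.ofFn fun i => F * c i - c i * F).prod =
      (-1) ^ m * ((List.ofFn fun i => F * c i - c i * F).prod * F) := by
  induction m with
  | zero => simp
  | succ m ih =>
    have h := ih fun k => c k.succ
    have hanti : F * (F * c 0 - c 0 * F) = -((F * c 0 - c 0 * F) * F) := by
      rw [mul_sub, sub_mul, ← mul_assoc, hF, mul_assoc (c 0), hF, mul_assoc F]
      noncomm_ring
    rw [List.ofFn_succ, List.prod_cons, ← mul_assoc, hanti, neg_mul, mul_assoc, h, pow_succ,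
      ← mul_assoc _ ((-1 : R) ^ m), ← ((Commute.neg_one_left _).pow_left m).eq]
    simp [mul_assoc]

end Telescope

/-- **Transgression identity `b ψ^{n+1}(F) = −ch^{n+2}(F)` (odd case, matrices).**
For `n ≥ 1` odd and `F² = 1`,
`Σ_{j=0}^{n+1} (−1)^j ψ(a₀,…,a_j·a_{j+1},…,a_{n+2}) + (−1)^{n+2} ψ(a_{n+2}·a₀,a₁,…,a_{n+1})
  = −(1/2)·Tr(F·[F,a₀]·[F,a₁]⋯[F,a_{n+2}])`. -/
theorem hochschild_boundary_psi {N : ℕ} (n : ℕ) (hn : 1 ≤ n) (hodd : Odd n)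
    (F : Matrix (Fin N) (Fin N) ℂ) (hF : F ^ 2 = 1)
    (a : Fin (n + 3) → Matrix (Fin N) (Fin N) ℂ) :
    (∑ j : Fin (n + 2), (-1 : ℂ) ^ (j : ℕ) *
        psiCochain n F
          (Fin.removeNth j.succ (Function.update a j.castSucc (a j.castSucc * a j.succ)))) +
      (-1 : ℂ) ^ (n + 2) *
        psiCochain n F
          (fun i : Fin (n + 2) => if i = 0 then a (Fin.last (n + 2)) * a 0 else a i.castSucc) =
      -(1 / 2) *
        (F * (List.ofFn fun j : Fin (n + 3) => F * a j - a j * F).prod).trace := by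
  have hFF : F * F = 1 := by rw [← pow_two, hF]
  have hsgn : (-1 : ℂ) ^ n = -1 := hodd.neg_one_pow
  have hsgnM : (-1 : Matrix (Fin N) (Fin N) ℂ) ^ n = -1 := hodd.neg_one_pow
  -- `P`, `Q`, `L` are the words `d a₁ ⋯ d a_{n+2}`, `d a₂ ⋯ d a_{n+2}`, `d a₁ ⋯ d a_{n+1}`.
  set P := (List.ofFn fun i : Fin (n + 2) => F * a i.succ - a i.succ * F).prod with hP
  set Q := (List.ofFn fun i : Fin (n + 1) =>
    F * a i.succ.succ - a i.succ.succ * F).prod with hQ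
  set L := (List.ofFn fun i : Fin (n + 1) =>
    F * a i.castSucc.succ - a i.castSucc.succ * F).prod with hL
  have hPQ : P = (F * a 1 - a 1 * F) * Q := by
    rw [hP, List.ofFn_succ, List.prod_cons, Fin.succ_zero_eq_one]
  have hFP : F * P = -(P * F) := by
    rw [hP, mul_prod_commutator F hFF fun i : Fin (n + 2) => a i.succ, pow_add, hsgnM]
    simp
  have hzero : psiCochain n F (mergeAt a 0) = (a 0 * a 1 * F * Q).trace := by
    simp only [psiCochain, mergeAt_zero_zero, mergeAt_zero_succ, hQ]
  have hsum : ∑ j : Fin (n + 1), (-1 : ℂ) ^ (j.succ : ℕ) * psiCochain n F (mergeAt a j.succ) =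
      -(a 0 * F * (a 1 * Q - L * a (Fin.last (n + 2)))).trace := by
    have h := sum_prod_mergeAt F fun k : Fin (n + 2) => a k.succ
    simp only [pow_succ, hsgnM, Fin.succ_zero_eq_one, Fin.succ_last] at h
    rw [← hQ, ← hL, neg_one_mul, neg_neg, one_mul] at h
    rw [← h, Finset.mul_sum, Matrix.trace_sum, ← Finset.sum_neg_distrib]
    refine Finset.sum_congr rfl fun j _ => ?_
    simp only [psiCochain, mergeAt_succ_zero, mergeAt_succ_succ, Fin.val_succ, pow_succ]
    rcases Nat.even_or_odd (j : ℕ) with he | he <;>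
    simp [he.neg_one_pow, -List.ofFn_succ]
  have hlast : psiCochain n F
      (fun i : Fin (n + 2) => if i = 0 then a (Fin.last (n + 2)) * a 0 else a i.castSucc) =
      (a 0 * F * (L * a (Fin.last (n + 2)))).trace := by
    simp only [psiCochain, if_true, Fin.succ_ne_zero, if_false, Fin.castSucc_succ, ← hL]
    rw [mul_assoc, mul_assoc, Matrix.trace_mul_comm]
    simp only [mul_assoc]
  have hright : (F * (List.ofFn fun j : Fin (n + 3) => F * a j - a j * F).prod).trace =
      2 * (a 0 * P).trace := by
    rw [List.ofFn_succ, List.prod_cons, ← hP]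
    have e : F * ((F * a 0 - a 0 * F) * P) = a 0 * P + F * (a 0 * P * F) := by
      calc F * ((F * a 0 - a 0 * F) * P) = F * F * (a 0 * P) - F * (a 0 * (F * P)) := by
            noncomm_ring
        _ = a 0 * P + F * (a 0 * P * F) := by
            rw [hFF, hFP]
            noncomm_ring
    rw [e, Matrix.trace_add, Matrix.trace_mul_comm F, mul_assoc (a 0 * P), hFF, mul_one, two_mul]
  change (∑ j : Fin (n + 2), (-1 : ℂ) ^ (j : ℕ) * psiCochain n F (mergeAt a j)) + _ = _
  rw [Fin.sum_univ_succ, hzero, hsum, hlast, hright, hPQ, pow_add, hsgn]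
  simp only [mul_sub, sub_mul, Matrix.trace_sub, mul_assoc, Fin.val_zero, pow_zero]
  ring

end
end

section
/- Let A be a unital C*-algebra, let D ∈ A be selfadjoint and invertible, let α ∈ (0,1], and let b ∈ A be such that the commutator [D,b] = Db − bD is selfadjoint. Let |D|^(−α) denote the continuous functional calculus of D applied to the function x ↦ |x|^(−α), and let D|D|^(−α) denote the continuous functional calculus of D applied to x ↦ x·|x|^(−α). Then −‖[D,b]‖ · |D|^(−α) ≤ [D|D|^(−α), b] ≤ ‖[D,b]‖ · |D|^(−α) in the canonical partial order on selfadjoint elements of A, where ‖·‖ is the C*-norm. -/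
/-!
For a suitable measure `μ` on `(0, ∞)` one has
`|D| ^ (-α) = ∫ t ^ (-α / 2) (t + D²)⁻¹ dμ(t)`, and hence
`D |D| ^ (-α) = ∫ t ^ (-α / 2) D (t + D²)⁻¹ dμ(t)`. Both sides of the upper bound depend linearly
and continuously on `|D| ^ (-α)`, so it is enough to prove the bound with a single resolvent
`R = (t + D²)⁻¹` in place of `|D| ^ (-α)`. With `T = [D, b]`, commuting `b` past the resolvent gives
`[D R, b] = R (t T - D T D) R`, and `-‖T‖ ≤ T ≤ ‖T‖` then yields
`[D R, b] ≤ ‖T‖ R (t + D²) R = ‖T‖ R` (`commutator_resolvent_le`). The lower bound follows by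
replacing `b` with `-b`.
-/

open MeasureTheory Set in
/-- Scalar form of the resolvent integral for `|x| ^ (-α)`, valid for `0 < α < 2`. It is the integral
representation of `y ^ p` with `p = 1 - α / 2` and `y = x ^ 2`, divided by `y`. -/
lemma exists_measure_abs_rpow_neg {α : ℝ} (hα0 : 0 < α) (hα2 : α < 2) :
    ∃ μ : Measure ℝ, ∀ x : ℝ, x ≠ 0 →
      IntegrableOn (fun t => t ^ (-α / 2) * (t + x ^ 2)⁻¹) (Ioi 0) μ ∧
      |x| ^ (-α) = ∫ t in Ioi 0, t ^ (-α / 2) * (t + x ^ 2)⁻¹ ∂μ := by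
  have hp : 1 - α / 2 ∈ Ioo (0 : ℝ) 1 := ⟨by linarith, by linarith⟩
  obtain ⟨μ, hμ⟩ := Real.exists_measure_rpow_eq_integral_rpowIntegrand₀₁ hp
  refine ⟨μ, fun x hx => ?_⟩
  have hx2 : 0 < x ^ 2 := by positivity
  obtain ⟨h1, h2⟩ := hμ (x ^ 2) hx2.le
  have key : EqOn (fun t => (x ^ 2)⁻¹ * Real.rpowIntegrand₀₁ (1 - α / 2) t (x ^ 2))
      (fun t => t ^ (-α / 2) * (t + x ^ 2)⁻¹) (Ioi 0) := by
    intro t (ht : 0 < t)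
    have e : t ^ (1 - α / 2) = t * t ^ (-α / 2) := by
      rw [show 1 - α / 2 = 1 + -α / 2 by ring, Real.rpow_add ht, Real.rpow_one]
    simp only [Real.rpowIntegrand₀₁, e]
    have : t + x ^ 2 ≠ 0 := by positivity
    field_simp
    ring
  refine ⟨(IntegrableOn.congr_fun (h1.const_mul _) key measurableSet_Ioi), ?_⟩
  rw [← setIntegral_congr_fun measurableSet_Ioi key, integral_const_mul, ← h2]
  have hx' : 0 < |x| := abs_pos.mpr hx
  rw [← sq_abs, ← Real.rpow_natCast, ← Real.rpow_mul hx'.le, ← Real.rpow_neg hx'.le,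
    ← Real.rpow_add hx']
  congr 1
  push_cast
  ring

/-- The estimate for a single resolvent `R = (t + D²)⁻¹`: with `T = [D, b]`, `c = ‖T‖` and
`S = t + D²`, one has `c R - [D R, b] = R (t (c - T) + D (c + T) D) R`, and both summands in the
middle are positive because `-c ≤ T ≤ c`. -/
lemma commutator_resolvent_le {A : Type*} [CStarAlgebra A] [PartialOrder A]
    [StarOrderedRing A] {D b R : A} (hD : IsSelfAdjoint D) (hR : IsSelfAdjoint R) {t : ℝ}
    (ht : 0 ≤ t) (hRS : R * (algebraMap ℝ A t + D * D) = 1)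
    (hSR : (algebraMap ℝ A t + D * D) * R = 1) (hDR : D * R = R * D)
    (hb : IsSelfAdjoint (D * b - b * D)) :
    0 ≤ ‖D * b - b * D‖ • R - (D * R * b - b * (D * R)) := by
  set c := ‖D * b - b * D‖
  set S := algebraMap ℝ A t + D * D with hS
  have h1 : 0 ≤ algebraMap ℝ A c - (D * b - b * D) :=
    sub_nonneg.mpr hb.le_algebraMap_norm_self
  have h2 : 0 ≤ algebraMap ℝ A c + (D * b - b * D) :=
    neg_le_iff_add_nonneg'.mp hb.neg_algebraMap_norm_le_self
  have h3 : 0 ≤ t • (algebraMap ℝ A c - (D * b - b * D)) +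
      D * (algebraMap ℝ A c + (D * b - b * D)) * D :=
    add_nonneg (smul_nonneg ht h1) (hD.conjugate_nonneg h2)
  have h4 := hR.conjugate_nonneg h3
  have hmid : t • (algebraMap ℝ A c - (D * b - b * D)) +
      D * (algebraMap ℝ A c + (D * b - b * D)) * D = c • S - (D * b * S - S * b * D) := by
    simp only [hS, Algebra.algebraMap_eq_smul_one, mul_add, add_mul, mul_sub, sub_mul, smul_sub,
      smul_add, smul_mul_assoc, mul_smul_comm, one_mul, mul_one, mul_assoc, smul_smul,
      mul_comm t c]
    abel
  rw [hmid] at h4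
  convert h4 using 1
  have e1 : R * (D * b * S) * R = D * R * b := by
    rw [hDR]; simp only [mul_assoc, hSR, mul_one]
  have e2 : R * (S * b * D) * R = b * (D * R) := by
    simp only [← mul_assoc, hRS, one_mul]
  have e3 : R * (c • S) * R = c • R := by
    rw [mul_smul_comm, hRS, smul_mul_assoc, one_mul]
  rw [mul_sub, sub_mul, e3, mul_sub, sub_mul, e1, e2]

open MeasureTheory Set in
/-- The upper bound, obtained by integrating `commutator_resolvent_le` against
`t ^ (-α / 2) dμ(t)`. -/
lemma commutator_cfc_le {A : Type*} [CStarAlgebra A] [PartialOrder A]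
    [StarOrderedRing A] (D b : A) (hD : IsSelfAdjoint D) (hDu : IsUnit D)
    (α : ℝ) (hα0 : 0 < α) (hα1 : α ≤ 1) (hb : IsSelfAdjoint (D * b - b * D)) :
    cfc (fun x : ℝ => x * |x| ^ (-α)) D * b - b * cfc (fun x : ℝ => x * |x| ^ (-α)) D ≤
        ‖D * b - b * D‖ • cfc (fun x : ℝ => |x| ^ (-α)) D := by
  have h0 : (0 : ℝ) ∉ spectrum ℝ D := spectrum.zero_notMem ℝ hDu
  have hne : ∀ x ∈ spectrum ℝ D, x ≠ 0 := fun x hx h => h0 (h ▸ hx)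
  obtain ⟨ε, hε, hball⟩ := Metric.isOpen_iff.mp (spectrum.isClosed (𝕜 := ℝ) D).isOpen_compl 0 h0
  have hεx : ∀ x ∈ spectrum ℝ D, ε ≤ |x| := by
    intro x hx
    by_contra! h
    exact hball (by simpa using h) hx
  obtain ⟨μ, hμ⟩ := exists_measure_abs_rpow_neg hα0 (by linarith)
  -- joint continuity and the uniform bound `f t ε` let the integral pass through the calculus
  let f : ℝ → ℝ → ℝ := fun t x => t ^ (-α / 2) * (t + x ^ 2)⁻¹
  have hf : ContinuousOn (Function.uncurry f) (Ioi (0 : ℝ) ×ˢ spectrum ℝ D) := by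
    rintro ⟨t, x⟩ ⟨ht, -⟩
    have ht : 0 < t := ht
    have : t + x ^ 2 ≠ 0 := by positivity
    refine ContinuousAt.continuousWithinAt ?_
    refine ContinuousAt.mul (f := fun q : ℝ × ℝ => q.1 ^ (-α / 2))
      (g := fun q : ℝ × ℝ => (q.1 + q.2 ^ 2)⁻¹) ?_ ?_
    · exact continuousAt_fst.rpow_const (Or.inl ht.ne')
    · exact ContinuousAt.inv₀ (by fun_prop) this
  have hbound : ∀ᵐ t ∂(μ.restrict (Ioi 0)), ∀ x ∈ spectrum ℝ D, ‖f t x‖ ≤ f t ε := by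
    filter_upwards [ae_restrict_mem measurableSet_Ioi] with t (ht : 0 < t) x hx
    have hsq : ε ^ 2 ≤ x ^ 2 := by
      rw [← sq_abs x]
      exact pow_le_pow_left₀ hε.le (hεx x hx) 2
    rw [Real.norm_of_nonneg (by positivity)]
    simp only [f]
    gcongr
  have hfin : HasFiniteIntegral (fun t => f t ε) (μ.restrict (Ioi 0)) := (hμ ε hε.ne').1.2
  have hint : IntegrableOn (fun t => cfc (f t) D) (Ioi 0) μ :=
    integrableOn_cfc measurableSet_Ioi f _ D hf hbound hfin
  have hcfc : cfc (fun x : ℝ => |x| ^ (-α)) D = ∫ t in Ioi 0, cfc (f t) D ∂μ := by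
    rw [← cfc_setIntegral measurableSet_Ioi f _ D hf hbound hfin]
    exact cfc_congr fun x hx => (hμ x (hne x hx)).2
  have hmul : cfc (fun x : ℝ => x * |x| ^ (-α)) D = D * cfc (fun x : ℝ => |x| ^ (-α)) D := by
    have hc : ContinuousOn (fun x : ℝ => |x| ^ (-α)) (spectrum ℝ D) :=
      continuous_abs.continuousOn.rpow_const fun x hx => Or.inl (abs_ne_zero.mpr (hne x hx))
    rw [cfc_mul (fun x : ℝ => x) _ D continuousOn_id hc, cfc_id' ℝ D]
  -- the difference of the two sides, as a continuous linear function of `|D| ^ (-α)`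
  let L : A →L[ℝ] A := ‖D * b - b * D‖ • ContinuousLinearMap.id ℝ A -
    ((ContinuousLinearMap.mul ℝ A).flip b ∘L ContinuousLinearMap.mul ℝ A D -
      ContinuousLinearMap.mul ℝ A b ∘L ContinuousLinearMap.mul ℝ A D)
  have hL : ∀ x, L x = ‖D * b - b * D‖ • x - (D * x * b - b * (D * x)) := fun x => by simp [L]
  rw [← sub_nonneg, hmul, ← hL, hcfc, ← L.integral_comp_comm hint]
  refine integral_nonneg_of_ae ?_
  filter_upwards [ae_restrict_mem measurableSet_Ioi] with t (ht : 0 < t)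
  have hS : ∀ x : ℝ, t + x ^ 2 ≠ 0 := fun x => by positivity
  have hcR : ContinuousOn (fun x : ℝ => (t + x ^ 2)⁻¹) (spectrum ℝ D) :=
    ContinuousOn.inv₀ (by fun_prop) fun x _ => hS x
  have hcS : ContinuousOn (fun x : ℝ => t + x ^ 2) (spectrum ℝ D) := by fun_prop
  have hSD : cfc (fun x : ℝ => t + x ^ 2) D = algebraMap ℝ A t + D * D := by
    rw [cfc_const_add t _ D, cfc_pow_id D 2, sq]
  have hfR : cfc (f t) D = t ^ (-α / 2) • cfc (fun x : ℝ => (t + x ^ 2)⁻¹) D :=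
    cfc_const_mul _ _ D hcR
  simp only [Pi.zero_apply, hfR, map_smul]
  refine smul_nonneg (by positivity) ?_
  rw [hL]
  refine commutator_resolvent_le hD (cfc_predicate _ D) ht.le ?_ ?_ ?_ hb
  · rw [← hSD, ← cfc_mul _ _ D hcR hcS, ← cfc_one ℝ D]
    exact cfc_congr fun x _ => inv_mul_cancel₀ (hS x)
  · rw [← hSD, ← cfc_mul _ _ D hcS hcR, ← cfc_one ℝ D]
    exact cfc_congr fun x _ => mul_inv_cancel₀ (hS x)
  · exact (cfc_commute_cfc (fun x : ℝ => x) (fun x : ℝ => (t + x ^ 2)⁻¹) D |> fun h => by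
      rwa [cfc_id' ℝ D] at h)

theorem commutator_cfc_sandwich (A : Type*) [CStarAlgebra A] [PartialOrder A]
    [StarOrderedRing A] (D b : A) (hD : IsSelfAdjoint D) (hDu : IsUnit D)
    (α : ℝ) (hα0 : 0 < α) (hα1 : α ≤ 1) (hb : IsSelfAdjoint (D * b - b * D)) :
    (-‖D * b - b * D‖) • cfc (fun x : ℝ => |x| ^ (-α)) D ≤
        cfc (fun x : ℝ => x * |x| ^ (-α)) D * b - b * cfc (fun x : ℝ => x * |x| ^ (-α)) D ∧
      cfc (fun x : ℝ => x * |x| ^ (-α)) D * b - b * cfc (fun x : ℝ => x * |x| ^ (-α)) D ≤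
        ‖D * b - b * D‖ • cfc (fun x : ℝ => |x| ^ (-α)) D := by
  refine ⟨?_, commutator_cfc_le D b hD hDu α hα0 hα1 hb⟩
  -- the lower bound is the upper bound for `-b`
  have hneg : ∀ x : A, x * -b - -b * x = -(x * b - b * x) := fun x => by
    rw [mul_neg, neg_mul, neg_sub, sub_neg_eq_add, neg_add_eq_sub]
  have h := commutator_cfc_le D (-b) hD hDu α hα0 hα1 (by rw [hneg]; exact hb.neg)
  rw [hneg, hneg, norm_neg] at h
  rw [neg_smul]
  exact neg_le.mp h
end
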